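/- arXiv:1108.6218 — 3 statements merged into one kernel-verified Lean document; each statement's English description precedes it below -/
import Mathlib

section
/- Let m be a cubefree integer that is not a perfect cube, and let P be a rational point on E_m : y² = x³ − m that is not in 2E_m(ℚ) (i.e. P ≠ 2Q for every Q ∈ E_m(ℚ)). Write P = (r/t², s/t³) with integers r, s, t satisfying gcd(r,t) = gcd(s,t) = 1. Then α = r − t²ω is not a square in K^×. -/
/-- The elliptic curve `E_m : y² = x³ − m` over `ℚ` in Weierstrass form. -/
def Wm (m : ℤ) : WeierstrassCurve.Affine ℚ := ⟨0, 0, 0, 0, -(m : ℚ)⟩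

lemma rat_cube_ne (m : ℤ) (hm : ¬ ∃ k : ℤ, k ^ 3 = m) (b : ℚ) : b ^ 3 ≠ (m : ℚ) := by
  intro h
  have hi : IsIntegral ℤ (b ^ 3) := by
    rw [h]
    exact isIntegral_algebraMap (R := ℤ) (A := ℚ) (x := m)
  obtain ⟨k, hk⟩ := IsIntegrallyClosed.exists_algebraMap_eq_of_isIntegral_pow
    (R := ℤ) (K := ℚ) (x := b) (n := 3) (by norm_num) hi
  apply hm
  refine ⟨k, ?_⟩
  rw [← hk] at h
  simp only [eq_intCast] at h
  exact_mod_cast h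

lemma basis_facts (m : ℤ) (hm : ¬ ∃ k : ℤ, k ^ 3 = m)
    (K : Type*) [Field K] [CharZero K] (hK : Module.finrank ℚ K = 3)
    (ω : K) (hω : ω ^ 3 = (m : K)) :
    (∀ a b c : ℚ, (a : K) + b * ω + c * ω ^ 2 = 0 → a = 0 ∧ b = 0 ∧ c = 0) ∧
    (∀ γ : K, ∃ a b c : ℚ, γ = (a : K) + b * ω + c * ω ^ 2) := by
  have hirr : Irreducible (Polynomial.X ^ 3 - Polynomial.C (m : ℚ)) :=
    X_pow_sub_C_irreducible_of_prime Nat.prime_three (rat_cube_ne m hm)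
  have hmin : Polynomial.X ^ 3 - Polynomial.C (m : ℚ) = minpoly ℚ ω := by
    apply minpoly.eq_of_irreducible_of_monic hirr
    · simp [hω]
    · exact Polynomial.monic_X_pow_sub_C _ (by norm_num)
  have hdeg : (minpoly ℚ ω).natDegree = 3 := by
    rw [← hmin]; exact Polynomial.natDegree_X_pow_sub_C
  have hli := linearIndependent_pow (K := ℚ) ω
  rw [hdeg] at hli
  constructor
  · intro a b c h
    rw [Fintype.linearIndependent_iff] at hli
    have := hli ![a, b, c] (by
      simp [Fin.sum_univ_three, Rat.smul_def]
      exact h)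
    exact ⟨this 0, this 1, this 2⟩
  · intro γ
    have hs := hli.span_eq_top_of_card_eq_finrank (by simp [hK])
    have hγ : γ ∈ Submodule.span ℚ (Set.range fun i : Fin 3 => ω ^ (i : ℕ)) := by
      rw [hs]; trivial
    obtain ⟨f, hf⟩ := (Submodule.mem_span_range_iff_exists_fun ℚ).1 hγ
    refine ⟨f 0, f 1, f 2, ?_⟩
    rw [← hf]
    simp [Fin.sum_univ_three, Rat.smul_def]

lemma double_of_eqs (m : ℤ) (x y a b c : ℚ)
    (h0 : a ^ 2 + 2 * b * c * m = x) (h1 : 2 * a * b + c ^ 2 * m = -1)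
    (h2 : b ^ 2 + 2 * a * c = 0) (hns : (Wm m).Nonsingular x y) :
    ∃ Q : (Wm m).Point, WeierstrassCurve.Affine.Point.some _ _ hns = 2 • Q := by
  have hc : c ≠ 0 := by
    rintro rfl
    have : b = 0 := by simpa using h2
    subst this
    norm_num at h1
  have ha : a = -b ^ 2 / (2 * c) := by
    field_simp
    linear_combination h2
  have hm : (m : ℚ) = (b ^ 3 - c) / c ^ 3 := by
    subst ha
    field_simp at h1 ⊢
    linear_combination h1
  have hnQ : (Wm m).Nonsingular (b / c) (1 / c) := by
    rw [WeierstrassCurve.Affine.nonsingular_iff', WeierstrassCurve.Affine.equation_iff]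
    refine ⟨?_, Or.inr ?_⟩
    · simp only [Wm, hm]
      field_simp
      ring
    · simp [Wm, hc]
  have hyne : 1 / c ≠ (Wm m).negY (b / c) (1 / c) := by
    simp only [WeierstrassCurve.Affine.negY, Wm]
    intro h
    field_simp at h
    norm_num at h
  have hX : x = (Wm m).addX (b / c) (b / c) ((Wm m).slope (b / c) (b / c) (1 / c) (1 / c)) := by
    rw [WeierstrassCurve.Affine.slope_of_Y_ne rfl hyne, ← h0, ha]
    simp only [WeierstrassCurve.Affine.addX, WeierstrassCurve.Affine.negY, Wm, hm]
    field_simp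
    ring
  have h2Q := WeierstrassCurve.Affine.Point.add_self_of_Y_ne (h₁ := hnQ) hyne
  rcases WeierstrassCurve.Affine.Y_eq_of_X_eq hns.1
    (WeierstrassCurve.Affine.nonsingular_add hnQ hnQ fun hxy => hyne hxy.right).1 hX with hY | hY
  · refine ⟨.some _ _ hnQ, ?_⟩
    rw [two_nsmul, h2Q, WeierstrassCurve.Affine.Point.some.injEq]
    exact ⟨hX, hY⟩
  · refine ⟨-.some _ _ hnQ, ?_⟩
    rw [two_nsmul, ← neg_add, h2Q, WeierstrassCurve.Affine.Point.neg_some,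
      WeierstrassCurve.Affine.Point.some.injEq]
    exact ⟨hX, hY⟩

/-- If `P = (r/t², s/t³) ∈ E_m(ℚ) \ 2E_m(ℚ)` with `gcd(r,t) = gcd(s,t) = 1`,
then `α = r − t²ω` is not a square in `K^×`. -/
theorem not_square_of_not_double
    (m : ℤ) (hm : ¬ ∃ k : ℤ, k ^ 3 = m) (hcf : ∀ d : ℤ, d ^ 3 ∣ m → IsUnit d)
    (K : Type*) [Field K] [CharZero K] (hK : Module.finrank ℚ K = 3)
    (ω : K) (hω : ω ^ 3 = (m : K))
    (P : (Wm m).Point) (hP : ∀ Q : (Wm m).Point, P ≠ 2 • Q)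
    (r s t : ℤ) (hrt : IsCoprime r t) (hst : IsCoprime s t)
    (hns : (Wm m).Nonsingular ((r : ℚ) / (t : ℚ) ^ 2) ((s : ℚ) / (t : ℚ) ^ 3))
    (hPeq : P = WeierstrassCurve.Affine.Point.some _ _ hns) :
    ¬ ∃ β : K, (r : K) - (t : K) ^ 2 * ω = β ^ 2 := by
  rintro ⟨β, hβ⟩
  have ht : t ≠ 0 := by
    rintro rfl
    have h := hns.1
    rw [WeierstrassCurve.Affine.equation_iff] at h
    simp [Wm] at h
    exact hm ⟨0, by simp [h]⟩
  have htK : (t : K) ≠ 0 := by exact_mod_cast ht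
  obtain ⟨hind, hspan⟩ := basis_facts m hm K hK ω hω
  obtain ⟨a, b, c, hγ⟩ := hspan (β / t)
  have hsq : (r : K) / (t : K) ^ 2 - ω = (β / t) ^ 2 := by
    rw [div_pow, ← hβ]
    field_simp
  rw [hγ] at hsq
  obtain ⟨e0, e1, e2⟩ := hind (a ^ 2 + 2 * b * c * m - (r : ℚ) / (t : ℚ) ^ 2)
    (2 * a * b + c ^ 2 * m + 1) (b ^ 2 + 2 * a * c) (by
      push_cast
      linear_combination -hsq - (2 * (b : K) * c + c ^ 2 * ω) * hω)
  obtain ⟨Q, hQ⟩ := double_of_eqs m _ _ a b c (by linear_combination e0)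
    (by linear_combination e1) e2 hns
  exact hP Q (hPeq.trans hQ)
end

section
/- Let b be a nonzero integer and let E' denote the elliptic curve y² = x³ − mb³. For an integer a, the following are equivalent: (i) a³ − mb³ = 1 and a − bω is a square in K^× (i.e. a − bω is a binomial unit that is a square); (ii) there exists a rational point P ∈ E'(ℚ) with 2P = (a, 1). -/
/-- The quadratic twist `E' : y² = x³ − mb³` over `ℚ` in Weierstrass form. -/
def Wmb (m b : ℤ) : WeierstrassCurve.Affine ℚ := ⟨0, 0, 0, 0, -((m : ℚ) * (b : ℚ) ^ 3)⟩

open WeierstrassCurve.Affine in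
lemma Wmb_nonsing (m b : ℤ) (x y : ℚ) (hy : y ≠ 0) (h : y ^ 2 = x ^ 3 - m * b ^ 3) :
    (Wmb m b).Nonsingular x y := by
  rw [nonsingular_iff']
  refine ⟨?_, Or.inr ?_⟩
  · rw [equation_iff']
    simp only [Wmb]
    linear_combination h
  · simpa [Wmb] using hy

open WeierstrassCurve.Affine in
lemma Wmb_eqn (m b : ℤ) (x y : ℚ) (h : (Wmb m b).Nonsingular x y) :
    y ^ 2 = x ^ 3 - m * b ^ 3 := by
  have := (equation_iff' _ _).1 h.1
  simp only [Wmb] at this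
  linear_combination this

open WeierstrassCurve.Affine in
lemma Wmb_dbl (m b : ℤ) (x y X Y : ℚ) (hy : y ≠ 0) (h : (Wmb m b).Nonsingular x y)
    (H : (Wmb m b).Nonsingular X Y) :
    2 • (Point.some _ _ h) = Point.some _ _ H ↔
      (3 * x ^ 2 / (2 * y)) ^ 2 - 2 * x = X ∧
        (3 * x ^ 2 / (2 * y)) * (x - X) - y = Y := by
  have hn : y ≠ (Wmb m b).negY x y := by
    simp only [negY, Wmb]
    intro h'
    apply hy
    linarith
  rw [two_nsmul, Point.add_some (fun h => hn h.2), Point.some.injEq, slope_of_Y_ne rfl hn]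
  have e : (3 * x ^ 2 + 2 * (Wmb m b).a₂ * x + (Wmb m b).a₄ - (Wmb m b).a₁ * y) /
      (y - (Wmb m b).negY x y) = 3 * x ^ 2 / (2 * y) := by
    simp only [negY, Wmb]
    congr 1 <;> ring
  rw [e]
  generalize 3 * x ^ 2 / (2 * y) = l
  simp only [addX, addY, negAddY, negY, Wmb]
  constructor
  · rintro ⟨h1, h2⟩
    refine ⟨by linear_combination h1, ?_⟩
    subst h1
    linear_combination h2
  · rintro ⟨h1, h2⟩
    refine ⟨by linear_combination h1, ?_⟩
    subst h1
    linear_combination h2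

lemma rat_not_cube (m : ℤ) (hm : ¬ ∃ k : ℤ, k ^ 3 = m) (q : ℚ) : q ^ 3 ≠ (m : ℚ) := by
  intro h
  have hi : IsIntegral ℤ q := by
    refine ⟨Polynomial.X ^ 3 - Polynomial.C m, Polynomial.monic_X_pow_sub_C m (by norm_num), ?_⟩
    rw [Polynomial.eval₂_sub, Polynomial.eval₂_pow, Polynomial.eval₂_X, Polynomial.eval₂_C, h]
    simp
  obtain ⟨k, hk⟩ := IsIntegrallyClosed.isIntegral_iff.1 hi
  apply hm
  refine ⟨k, ?_⟩
  have : (k : ℚ) = q := by simpa using hk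
  rw [← this] at h
  exact_mod_cast h

open Polynomial in
lemma cube_li (m : ℤ) (hm : ¬ ∃ k : ℤ, k ^ 3 = m)
    (K : Type*) [Field K] [CharZero K] (ω : K) (hω : ω ^ 3 = (m : K)) :
    LinearIndependent ℚ (fun i : Fin 3 => ω ^ (i : ℕ)) := by
  have hirr : Irreducible (X ^ 3 - C (m : ℚ)) :=
    X_pow_sub_C_irreducible_of_prime Nat.prime_three (rat_not_cube m hm)
  have hmin : X ^ 3 - C (m : ℚ) = minpoly ℚ ω := by
    apply minpoly.eq_of_irreducible_of_monic hirr
    · simp [hω]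
    · exact monic_X_pow_sub_C _ (by norm_num)
  have hd : (minpoly ℚ ω).natDegree = 3 := by
    rw [← hmin, natDegree_X_pow_sub_C]
  have := linearIndependent_pow (K := ℚ) ω
  rw [hd] at this
  exact this

lemma cube_indep (m : ℤ) (hm : ¬ ∃ k : ℤ, k ^ 3 = m)
    (K : Type*) [Field K] [CharZero K] (ω : K) (hω : ω ^ 3 = (m : K)) (u v w : ℚ)
    (h : (u : K) + v * ω + w * ω ^ 2 = 0) : u = 0 ∧ v = 0 ∧ w = 0 := by
  have := Fintype.linearIndependent_iff.1 (cube_li m hm K ω hω) ![u, v, w] (by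
    simp [Fin.sum_univ_three, Rat.smul_def, h])
  exact ⟨this 0, this 1, this 2⟩

lemma cube_span (m : ℤ) (hm : ¬ ∃ k : ℤ, k ^ 3 = m)
    (K : Type*) [Field K] [CharZero K] (hK : Module.finrank ℚ K = 3)
    (ω : K) (hω : ω ^ 3 = (m : K)) (α : K) :
    ∃ u v w : ℚ, α = (u : K) + v * ω + w * ω ^ 2 := by
  let B := basisOfLinearIndependentOfCardEqFinrank (cube_li m hm K ω hω) (by simp [hK])
  refine ⟨B.repr α 0, B.repr α 1, B.repr α 2, ?_⟩
  have hB : ∀ i : Fin 3, B i = ω ^ (i : ℕ) := fun i => by simp [B]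
  have := B.sum_repr α
  simp only [hB, Fin.sum_univ_three, Rat.smul_def] at this
  simpa using this.symm

/-- For integers `a`, `b ≠ 0`, the element `a − bω` is a binomial unit
(`a³ − mb³ = 1`) that is a square in `K^×` iff there is `P ∈ E'(ℚ)` with `2P = (a, 1)`,
where `E' : y² = x³ − mb³`. -/
theorem binomial_unit_square_iff_double_point
    (m : ℤ) (hm : ¬ ∃ k : ℤ, k ^ 3 = m)
    (K : Type*) [Field K] [CharZero K] (hK : Module.finrank ℚ K = 3)
    (ω : K) (hω : ω ^ 3 = (m : K))
    (b : ℤ) (hb : b ≠ 0) (a : ℤ) :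
    (a ^ 3 - m * b ^ 3 = 1 ∧
        ∃ α : K, α ≠ 0 ∧ α ^ 2 = (a : K) - (b : K) * ω) ↔
      ∃ (P : (Wmb m b).Point) (h : (Wmb m b).Nonsingular (a : ℚ) 1),
        2 • P = WeierstrassCurve.Affine.Point.some _ _ h := by
  have hbQ : (b : ℚ) ≠ 0 := by exact_mod_cast hb
  constructor
  · rintro ⟨h1, α, -, hα⟩
    have h1q : (a : ℚ) ^ 3 - m * b ^ 3 = 1 := by exact_mod_cast h1
    obtain ⟨u, v', w', rfl⟩ := cube_span m hm K hK ω hω α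
    obtain ⟨v, rfl⟩ : ∃ v, v' = v * b := ⟨v' / b, by field_simp⟩
    obtain ⟨w, rfl⟩ : ∃ w, w' = w * b ^ 2 := ⟨w' / b ^ 2, by field_simp⟩
    obtain ⟨e1, e2, e3⟩ := cube_indep m hm K ω hω (u ^ 2 + 2 * v * w * (m * b ^ 3) - a)
      (b * (2 * u * v + w ^ 2 * (m * b ^ 3) + 1)) (b ^ 2 * (v ^ 2 + 2 * u * w)) (by
        push_cast at hα ⊢
        linear_combination hα - (2 * v * w * b ^ 3 + w ^ 2 * b ^ 4 * ω) * hω)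
    have e2 : 2 * u * v + w ^ 2 * (m * b ^ 3) + 1 = 0 := by simpa [hb] using e2
    have e3 : v ^ 2 + 2 * u * w = 0 := by simpa [hb] using e3
    have hw : w ≠ 0 := by
      rintro rfl
      have : v = 0 := by simpa using e3
      subst this
      simp at e2
    obtain ⟨x, rfl⟩ : ∃ x, v = x * w := ⟨v / w, by field_simp⟩
    have hu : u = - x ^ 2 * w / 2 := by
      apply mul_right_cancel₀ hw
      linear_combination e3 / 2
    subst hu
    have hc : (m : ℚ) * b ^ 3 = x ^ 3 - (1 / w) ^ 2 := by
      field_simp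
      linear_combination e2
    have hX : (3 * x ^ 2 / (2 * (1 / w))) ^ 2 - 2 * x = a := by
      rw [hc] at e1
      field_simp at e1 ⊢
      linear_combination e1
    have H := Wmb_nonsing m b a 1 one_ne_zero (by linear_combination -h1q)
    have hY : ((3 * x ^ 2 / (2 * (1 / w))) * (x - a) - 1 / w) ^ 2 = 1 := by
      refine Eq.trans ?_ h1q
      rw [hc, ← hX]
      field_simp
      ring
    rcases eq_or_eq_neg_of_sq_eq_sq _ _ (hY.trans (one_pow 2).symm) with hY | hY
    · exact ⟨.some _ _ (Wmb_nonsing m b x (1 / w) (by simpa using hw) (by rw [hc]; ring)), H,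
        (Wmb_dbl m b _ _ _ _ (by simpa using hw) _ _).2 ⟨hX, hY⟩⟩
    · refine ⟨.some _ _ (Wmb_nonsing m b x (-(1 / w)) (by simpa using hw) (by rw [hc]; ring)), H,
        (Wmb_dbl m b _ _ _ _ (by simpa using hw) _ _).2 ⟨?_, ?_⟩⟩
      · rw [← hX, mul_neg, div_neg]; ring
      · rw [mul_neg, div_neg]; linear_combination -hY
  · rintro ⟨P, h, hP⟩
    have h1q := Wmb_eqn m b _ _ h
    have h1 : a ^ 3 - m * b ^ 3 = 1 := by
      have : (a : ℚ) ^ 3 - m * b ^ 3 = 1 := by linear_combination -h1q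
      exact_mod_cast this
    refine ⟨h1, ?_⟩
    have h1K : (a : K) ^ 3 - m * b ^ 3 = 1 := by exact_mod_cast h1
    rcases P with _ | ⟨x, y, hxy⟩
    · have h0 : (WeierstrassCurve.Affine.Point.zero : (Wmb m b).Point) = 0 := rfl
      rw [h0, two_nsmul, add_zero] at hP
      exact absurd hP.symm (WeierstrassCurve.Affine.Point.some_ne_zero _)
    · have hy : y ≠ 0 := by
        rintro rfl
        rw [two_nsmul, WeierstrassCurve.Affine.Point.add_self_of_Y_eq
          (by simp [WeierstrassCurve.Affine.negY, Wmb])] at hP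
        exact absurd hP.symm (WeierstrassCurve.Affine.Point.some_ne_zero _)
      obtain ⟨hX, -⟩ := (Wmb_dbl m b _ _ _ _ hy _ _).1 hP
      have hc := Wmb_eqn m b _ _ hxy
      have hyK : (y : K) ≠ 0 := by exact_mod_cast hy
      have hcK : (y : K) ^ 2 = x ^ 3 - m * b ^ 3 := by exact_mod_cast hc
      have hX' : 9 * x ^ 4 - 8 * x * y ^ 2 = 4 * y ^ 2 * a := by
        rw [← hX]; field_simp; ring
      have hXK : 9 * (x : K) ^ 4 - 8 * x * y ^ 2 = 4 * y ^ 2 * a := by exact_mod_cast hX'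
      have key : (((x : K) ^ 2 - 2 * (b * ω) * x - 2 * (b * ω) ^ 2) / (2 * y)) ^ 2
          = (a : K) - b * ω := by
        rw [div_pow, div_eq_iff (pow_ne_zero 2 (mul_ne_zero two_ne_zero hyK))]
        have hθ : (b * ω) ^ 3 = (x : K) ^ 3 - y ^ 2 := by
          rw [mul_pow, hω]; linear_combination hcK
        generalize (b : K) * ω = t at *
        linear_combination (8 * x + 4 * t) * hθ + hXK
      refine ⟨_, ?_, key⟩
      intro h0
      rw [h0] at key
      have : (a : K) = b * ω := by linear_combination -key
      rw [this, mul_pow, hω] at h1K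
      apply one_ne_zero (α := K)
      linear_combination -h1K
end

section
/- Let m be a cubefree integer with m ≢ 0, ±1 (mod 9), not a perfect cube, let b be a nonzero integer, and let E' be the elliptic curve y² = x³ − mb³. Let P = (x, y) be a rational point on E' with P ∉ 2E'(ℚ), write x = r/s² with coprime integers r, s, and assume gcd(r, b) = 1. Set α = r − s²bω ∈ O_K. Then α is not a square in K^×, so K(√α) is a quadratic extension of K, and every prime ideal of O_K not lying above 2 is unramified in K(√α). -/
open NumberField

open Polynomial in
lemma rep_cubic {m : ℤ} (hm : ¬ ∃ k : ℤ, k ^ 3 = m) {K : Type*} [Field K] [NumberField K]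
    (hK : Module.finrank ℚ K = 3) (w : K) (hw : w ^ 3 = (m : K)) :
    (∀ x : K, ∃ a b c : ℚ, x = a + b * w + c * w ^ 2) ∧
    (∀ a b c : ℚ, (a : K) + b * w + c * w ^ 2 = 0 → a = 0 ∧ b = 0 ∧ c = 0) := by
  have hirr : Irreducible (X ^ 3 - C (m : ℚ)) := by
    apply X_pow_sub_C_irreducible_of_prime Nat.prime_three
    intro q hq
    have hint : IsIntegral ℤ q := by
      apply IsIntegral.of_pow (n := 3) (by norm_num)
      rw [hq]; exact isIntegral_algebraMap (R := ℤ) (x := m)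
    obtain ⟨k, hk⟩ := IsIntegrallyClosed.isIntegral_iff.mp hint
    apply hm
    refine ⟨k, ?_⟩
    rw [← hk] at hq
    simp at hq
    exact_mod_cast hq
  have hmin : minpoly ℚ w = X ^ 3 - C (m : ℚ) := by
    symm
    apply minpoly.eq_of_irreducible_of_monic hirr
    · simp [hw]
    · exact monic_X_pow_sub_C _ (by norm_num)
  have hdeg : (minpoly ℚ w).natDegree = 3 := by
    rw [hmin]; exact natDegree_X_pow_sub_C
  have hli := linearIndependent_pow (K := ℚ) w
  rw [hdeg] at hli
  constructor
  · intro x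
    let B := basisOfLinearIndependentOfCardEqFinrank hli (by simp [hK])
    have := B.sum_repr x
    refine ⟨B.repr x 0, B.repr x 1, B.repr x 2, ?_⟩
    conv_lhs => rw [← this]
    simp [Fin.sum_univ_three, B, Algebra.smul_def]
  · intro a b c h
    have := Fintype.linearIndependent_iff.mp hli ![a, b, c] (by
      simp [Fin.sum_univ_three, Algebra.smul_def]; linear_combination h)
    exact ⟨this 0, this 1, this 2⟩

lemma not_square
    (m : ℤ) (hm : ¬ ∃ k : ℤ, k ^ 3 = m) 
    (K : Type*) [Field K] [NumberField K] (hK : Module.finrank ℚ K = 3)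
    (w : K) (hw : w ^ 3 = (m : K))
    (b : ℤ) (hb : b ≠ 0)
    (P : (Wmb m b).Point) (hP : ∀ Q : (Wmb m b).Point, P ≠ 2 • Q)
    (x y : ℚ)
    (hns : (Wmb m b).Nonsingular x y)
    (hPeq : P = WeierstrassCurve.Affine.Point.some _ _ hns) (β : K)
    (hβ : (x : K) - b * w = β ^ 2) : False := by
  obtain ⟨h1, h2⟩ := rep_cubic hm hK w hw
  obtain ⟨a0, a1, a2, rfl⟩ := h1 β
  obtain ⟨e0, e1, e2⟩ := h2 (a0 ^ 2 + 2 * m * a1 * a2 - x) (2 * a0 * a1 + m * a2 ^ 2 + b)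
    (a1 ^ 2 + 2 * a0 * a2) (by
      push_cast
      linear_combination (-1 : K) * hβ - (2 * a1 * a2 + a2 ^ 2 * w : K) * hw)
  have hbq : (b : ℚ) ≠ 0 := by exact_mod_cast hb
  have ha2 : a2 ≠ 0 := by
    rintro rfl
    have : a1 = 0 := by simpa using e2
    subst this
    simp at e1
    exact hb e1
  have ha0 : a0 = - a1 ^ 2 / (2 * a2) := by field_simp; linear_combination e2
  have hmm : (m : ℚ) = (a1 ^ 3 / a2 - b) / a2 ^ 2 := by
    rw [ha0] at e1
    field_simp at e1 ⊢
    linear_combination e1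
  have heqP := hns.1
  rw [WeierstrassCurve.Affine.equation_iff] at heqP
  simp [Wmb] at heqP
  have key : ∀ z : ℚ, z = b ^ 2 / a2 ∨ z = - (b ^ 2 / a2) →
      ∃ hQ : (Wmb m b).Nonsingular (b * a1 / a2) z, ∃ y', ∃ h', 
      WeierstrassCurve.Affine.Point.some _ _ hQ + WeierstrassCurve.Affine.Point.some _ _ hQ = 
       WeierstrassCurve.Affine.Point.some (W' := Wmb m b) x y' h' ∧
       y' = - z - (3 * (b * a1 / a2) ^ 2 / (2 * z)) * (x - b * a1 / a2) := by
    intro z hz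
    have hz2 : z ^ 2 = b ^ 4 / a2 ^ 2 := by
      rcases hz with rfl | rfl <;> (field_simp)
    have hz0 : z ≠ 0 := by
      intro h; rw [h] at hz2
      have : (b : ℚ) ^ 4 / a2 ^ 2 ≠ 0 := by positivity
      exact this (by rw [← hz2]; ring)
    have hQ : (Wmb m b).Nonsingular (b * a1 / a2) z := by
      rw [WeierstrassCurve.Affine.nonsingular_iff, WeierstrassCurve.Affine.equation_iff]
      constructor
      · simp only [Wmb]
        rw [hmm]; ring_nf; ring_nf at hz2; rw [hz2]
      · right; simp only [Wmb]
        intro h; apply hz0; linarith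
    have hne : z ≠ (Wmb m b).negY (b * a1 / a2) z := by
      simp only [WeierstrassCurve.Affine.negY, Wmb]
      intro h; apply hz0; linarith
    have hsl : (Wmb m b).slope (b * a1 / a2) (b * a1 / a2) z z =
        3 * (b * a1 / a2) ^ 2 / (2 * z) := by
      rw [WeierstrassCurve.Affine.slope_of_Y_ne rfl hne]
      simp only [WeierstrassCurve.Affine.negY, Wmb]
      congr 1 <;> ring
    have hX : (Wmb m b).addX (b * a1 / a2) (b * a1 / a2) 
        ((Wmb m b).slope (b * a1 / a2) (b * a1 / a2) z z) = x := by
      rw [hsl]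
      simp only [WeierstrassCurve.Affine.addX, Wmb]
      have : x = a0 ^ 2 + 2 * m * a1 * a2 := by linarith
      rw [this, ha0, hmm, div_pow, mul_pow 2 z, hz2]
      field_simp
      ring
    refine ⟨hQ, (Wmb m b).addY (b * a1 / a2) (b * a1 / a2) z
        ((Wmb m b).slope (b * a1 / a2) (b * a1 / a2) z z), ?_⟩
    have hh := WeierstrassCurve.Affine.Point.add_self_of_Y_ne (h₁ := hQ) hne
    have hn := WeierstrassCurve.Affine.nonsingular_add hQ hQ fun hxy => hne hxy.right
    have hn' := hn
    rw [hX] at hn'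
    refine ⟨hn', ?_, ?_⟩
    · rw [hh]
      congr 1
    · simp only [WeierstrassCurve.Affine.addY, WeierstrassCurve.Affine.negAddY, WeierstrassCurve.Affine.negY, hX]
      rw [hsl]; simp only [Wmb]; ring
  obtain ⟨hQ, y1, hy1, hs1, hf1⟩ := key _ (Or.inl rfl)
  obtain ⟨hQ', y2, hy2, hs2, hf2⟩ := key _ (Or.inr rfl)
  have h12 : y2 = - y1 := by rw [hf1, hf2]; field_simp; ring
  have heq1 := hy1.1
  rw [WeierstrassCurve.Affine.equation_iff] at heq1
  simp [Wmb] at heq1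
  have : y ^ 2 = y1 ^ 2 := by rw [heqP, heq1]
  rcases sq_eq_sq_iff_eq_or_eq_neg.mp this with h | h
  · subst h
    apply hP (WeierstrassCurve.Affine.Point.some _ _ hQ)
    rw [two_nsmul, hs1, hPeq]
  · rw [← h12] at h
    subst h
    apply hP (WeierstrassCurve.Affine.Point.some _ _ hQ')
    rw [two_nsmul, hs2, hPeq]

open Polynomial in
lemma unram_of_unit {K L : Type*} [Field K] [NumberField K] [Field L] [NumberField L] [Algebra K L]
    (x : L) (u : 𝓞 K) (hx : x ^ 2 = algebraMap K L (u : K)) (hgen : Algebra.adjoin K {x} = ⊤)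
    (𝔭 : Ideal (𝓞 K)) (𝔮 : Ideal (𝓞 L)) (hp : 𝔭.IsPrime) (hp0 : 𝔭 ≠ ⊥) (hq : 𝔮.IsPrime)
    (h2 : (2 : 𝓞 K) ∉ 𝔭) (hcomap : Ideal.comap (algebraMap (𝓞 K) (𝓞 L)) 𝔮 = 𝔭) (hu : u ∉ 𝔭) :
    Ideal.ramificationIdx' 𝔭 𝔮 = 1 := by
  have hxi : IsIntegral ℤ x := by
    apply IsIntegral.of_pow (n := 2) (by norm_num)
    rw [hx]
    exact (RingOfIntegers.isIntegral_coe u).map (algebraMap K L |>.toIntAlgHom)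
  let X0 : 𝓞 L := ⟨x, hxi⟩
  have hX0 : X0 ^ 2 = algebraMap (𝓞 K) (𝓞 L) u := by
    apply RingOfIntegers.ext
    change x ^ 2 = algebraMap (𝓞 L) L (algebraMap (𝓞 K) (𝓞 L) u)
    rw [← IsScalarTower.algebraMap_apply (𝓞 K) (𝓞 L) L, IsScalarTower.algebraMap_apply (𝓞 K) K L]
    exact hx
  have hmem := aeval_derivative_mem_differentIdeal (𝓞 K) K L X0 hgen
  have hint : IsIntegral (𝓞 K) X0 := Algebra.IsIntegral.isIntegral X0
  have hdvd : minpoly (𝓞 K) X0 ∣ X ^ 2 - C u := by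
    apply minpoly.isIntegrallyClosed_dvd hint
    simp [hX0]
  have hle : Ideal.map (algebraMap (𝓞 K) (𝓞 L)) 𝔭 ≤ 𝔮 := by
    rw [Ideal.map_le_iff_le_comap, hcomap]
  have hpm : 𝔭.IsMaximal := hp.isMaximal hp0
  by_contra hram
  rw [← ne_eq, Ideal.ramificationIdx'_ne_one_iff hle] at hram
  have := pow_sub_one_dvd_differentIdeal (𝓞 K) 𝔮 2 hp0 (Ideal.dvd_iff_le.mpr hram)
  simp only [Nat.add_one_sub_one, pow_one] at this
  have hmem2 := Ideal.dvd_iff_le.mp this hmem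
  obtain ⟨q, hq'⟩ := hdvd
  have hder := congrArg (fun f => aeval X0 (derivative f)) hq'
  simp [derivative_mul] at hder
  have h2x : 2 * X0 ∈ 𝔮 := by
    rw [← one_add_one_eq_two, hder]; exact 𝔮.mul_mem_right _ hmem2
  rcases hq.mem_or_mem h2x with h | h
  · apply h2; rw [← hcomap, Ideal.mem_comap, map_ofNat]; exact h
  · apply hu; rw [← hcomap, Ideal.mem_comap, ← hX0]; exact 𝔮.pow_mem_of_mem h 2 (by norm_num)

lemma unram_of_unit' {K L : Type*} [Field K] [NumberField K] [Field L] [NumberField L] [Algebra K L]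
    (θ : L) (α : K) (hθ : θ ^ 2 = algebraMap K L α) (hgen : Algebra.adjoin K {θ} = ⊤)
    (κ : K) (hκ : κ ≠ 0) (u : 𝓞 K) (hx : α * κ ^ 2 = (u : K))
    (𝔭 : Ideal (𝓞 K)) (𝔮 : Ideal (𝓞 L)) (hp : 𝔭.IsPrime) (hp0 : 𝔭 ≠ ⊥) (hq : 𝔮.IsPrime)
    (h2 : (2 : 𝓞 K) ∉ 𝔭) (hcomap : Ideal.comap (algebraMap (𝓞 K) (𝓞 L)) 𝔮 = 𝔭) (hu : u ∉ 𝔭) :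
    Ideal.ramificationIdx' 𝔭 𝔮 = 1 := by
  refine unram_of_unit (θ * algebraMap K L κ) u ?_ ?_ 𝔭 𝔮 hp hp0 hq h2 hcomap hu
  · rw [mul_pow, hθ, ← hx]; simp
  · rw [eq_top_iff, ← hgen]
    apply Algebra.adjoin_le
    simp only [Set.singleton_subset_iff, SetLike.mem_coe]
    have : θ = κ⁻¹ • (θ * algebraMap K L κ) := by
      rw [Algebra.smul_def, map_inv₀]
      have : algebraMap K L κ ≠ 0 := by simpa using hκ
      field_simp
    rw [this]
    apply Subalgebra.smul_mem
    rw [← this]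
    exact Algebra.subset_adjoin rfl

open Polynomial in
lemma finrank_two {K L : Type*} [Field K] [Field L] [Algebra K L]
    (θ : L) (α : K) (hθ : θ ^ 2 = algebraMap K L α) (hgen : Algebra.adjoin K {θ} = ⊤)
    (hsq : ¬ ∃ β : K, α = β ^ 2) : Module.finrank K L = 2 := by
  have hirr : Irreducible (X ^ 2 - C α) := by
    apply X_pow_sub_C_irreducible_of_prime Nat.prime_two
    intro b hb; exact hsq ⟨b, hb.symm⟩
  have hmin : minpoly K θ = X ^ 2 - C α := by
    symm
    apply minpoly.eq_of_irreducible_of_monic hirr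
    · simp [hθ]
    · exact monic_X_pow_sub_C _ (by norm_num)
  have hint : IsIntegral K θ := ⟨_, monic_X_pow_sub_C α (by norm_num : 2 ≠ 0), by simp [hθ]⟩
  have hb := PowerBasis.finrank (Algebra.adjoin.powerBasis' hint)
  rw [Algebra.adjoin.powerBasis'_dim, hmin, natDegree_X_pow_sub_C] at hb
  rw [← hb, hgen]
  exact (Subalgebra.topEquiv.toLinearEquiv.finrank_eq).symm

set_option maxRecDepth 100000 in
lemma zmod9_aux : ∀ m r c : ZMod 9, r ^ 3 = m * c ^ 3 →
    (r ^ 3 = 0 ∧ c ^ 3 = 0) ∨ m = 0 ∨ m = 1 ∨ m = -1 := by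
  decide

lemma three_not_dvd (m : ℤ)
    (h9 : (m : ZMod 9) ≠ 0 ∧ (m : ZMod 9) ≠ 1 ∧ (m : ZMod 9) ≠ -1)
    (r c t : ℤ) (h : t ^ 2 = r ^ 3 - m * c ^ 3) (hrc : IsCoprime r c) : ¬ (3 : ℤ) ∣ t := by
  rintro ⟨k, rfl⟩
  have h0 : ((r : ZMod 9)) ^ 3 = m * (c : ZMod 9) ^ 3 := by
    have : ((r ^ 3 - m * c ^ 3 : ℤ) : ZMod 9) = 0 := by
      rw [← h, ZMod.intCast_zmod_eq_zero_iff_dvd]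
      exact ⟨k ^ 2, by push_cast; ring⟩
    push_cast at this
    linear_combination this
  rcases zmod9_aux _ _ _ h0 with ⟨h1, h2⟩ | h1 | h1 | h1
  · have hd : ∀ z : ℤ, (z : ZMod 9) ^ 3 = 0 → (3 : ℤ) ∣ z := by
      intro z hz
      have : ((z ^ 3 : ℤ) : ZMod 9) = 0 := by push_cast; exact hz
      rw [ZMod.intCast_zmod_eq_zero_iff_dvd] at this
      exact Int.prime_three.dvd_of_dvd_pow (dvd_trans (by norm_num) this)
    have := hrc.isUnit_of_dvd' (hd r h1) (hd c h2)
    exact Int.prime_three.not_isUnit this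
  · exact h9.1 h1
  · exact h9.2.1 h1
  · exact h9.2.2 h1

lemma exists_unit_mult
    (m : ℤ) (hm : ¬ ∃ k : ℤ, k ^ 3 = m) (hcf : ∀ d : ℤ, d ^ 3 ∣ m → IsUnit d)
    (h9 : (m : ZMod 9) ≠ 0 ∧ (m : ZMod 9) ≠ 1 ∧ (m : ZMod 9) ≠ -1)
    (K : Type*) [Field K] [NumberField K]
    (ω : 𝓞 K) (hω : ω ^ 3 = (m : 𝓞 K))
    (r c t : ℤ) (hc : c ≠ 0) (h : t ^ 2 = r ^ 3 - m * c ^ 3) (hrc : IsCoprime r c)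
    (α : 𝓞 K) (hα : α = (r : 𝓞 K) - (c : 𝓞 K) * ω)
    (𝔭 : Ideal (𝓞 K)) (hp : 𝔭.IsPrime) :
    ∃ κ : K, κ ≠ 0 ∧ ∃ u : 𝓞 K, (α : K) * κ ^ 2 = (u : K) ∧ u ∉ 𝔭 := by
  by_cases hα𝔭 : α ∈ 𝔭
  swap
  · exact ⟨1, one_ne_zero, α, by simp, hα𝔭⟩
  have ht : t ≠ 0 := by
    rintro rfl
    have h3 : r ^ 3 = m * c ^ 3 := by linarith
    have hd : c ^ 3 ∣ r ^ 3 := ⟨m, by rw [h3]; ring⟩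
    replace hd : c ∣ r := (Int.pow_dvd_pow_iff (by norm_num)).mp hd
    obtain ⟨k, rfl⟩ := hd
    apply hm
    refine ⟨k, ?_⟩
    have : c ^ 3 ≠ 0 := pow_ne_zero _ hc
    apply mul_left_cancel₀ this
    linear_combination h3
  set β : 𝓞 K := (r : 𝓞 K) ^ 2 + r * (c * ω) + (c * ω) ^ 2 with hβ
  have hR : ((t : 𝓞 K)) ^ 2 = r ^ 3 - m * c ^ 3 := by exact_mod_cast congrArg (Int.cast (R := 𝓞 K)) h
  have hαβ : α * β = (t : 𝓞 K) ^ 2 := by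
    rw [hα, hβ, hR]; linear_combination (- (c : 𝓞 K) ^ 3) * hω
  by_cases hβ𝔭 : β ∈ 𝔭
  swap
  · have htK : (t : K) ≠ 0 := by exact_mod_cast ht
    have hαβK : (α : K) * β = (t : K) ^ 2 := by
      have := congrArg (algebraMap (𝓞 K) K) hαβ
      simpa using this
    have hβ0 : (β : K) ≠ 0 := by
      intro h0; rw [h0, mul_zero] at hαβK; exact pow_ne_zero 2 htK hαβK.symm
    refine ⟨(β : K) / t, div_ne_zero hβ0 htK, β, ?_, hβ𝔭⟩
    field_simp
    linear_combination hαβK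
  -- third case
  have hcop : ∀ a b : ℤ, IsCoprime a b → (a : 𝓞 K) ∈ 𝔭 → (b : 𝓞 K) ∉ 𝔭 := by
    rintro a b ⟨x, y, hxy⟩ ha hb
    apply hp.ne_top
    rw [Ideal.eq_top_iff_one]
    have : (1 : 𝓞 K) = x * a + y * b := by exact_mod_cast (congrArg (Int.cast (R := 𝓞 K)) hxy).symm
    rw [this]
    exact 𝔭.add_mem (𝔭.mul_mem_left _ ha) (𝔭.mul_mem_left _ hb)
  have ht𝔭 : (t : 𝓞 K) ∈ 𝔭 := hp.mem_of_pow_mem 2 (by rw [← hαβ]; exact 𝔭.mul_mem_right _ hα𝔭)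
  have h3𝔭 : ((3 : ℤ) : 𝓞 K) ∉ 𝔭 := by
    refine hcop t 3 ?_ ht𝔭
    exact ((Int.prime_three.coprime_iff_not_dvd).mpr (three_not_dvd m h9 r c t h hrc)).symm
  have hr𝔭 : (r : 𝓞 K) ∈ 𝔭 := by
    have : ((3 : ℤ) : 𝓞 K) * (r : 𝓞 K) ^ 2 ∈ 𝔭 := by
      have : ((3 : ℤ) : 𝓞 K) * (r : 𝓞 K) ^ 2 = β + α * (3 * r - α) := by
        rw [hβ, hα]; push_cast; ring
      rw [this]
      exact 𝔭.add_mem hβ𝔭 (𝔭.mul_mem_right _ hα𝔭)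
    exact hp.mem_of_pow_mem 2 ((hp.mem_or_mem this).resolve_left h3𝔭)
  have hc𝔭 := hcop r c hrc hr𝔭
  have hω𝔭 : ω ∈ 𝔭 := by
    have : (c : 𝓞 K) * ω ∈ 𝔭 := by
      have : (c : 𝓞 K) * ω = r - α := by rw [hα]; ring
      rw [this]
      exact 𝔭.sub_mem hr𝔭 hα𝔭
    exact (hp.mem_or_mem this).resolve_left hc𝔭
  have hm𝔭 : (m : 𝓞 K) ∈ 𝔭 := by rw [← hω]; exact 𝔭.pow_mem_of_mem hω𝔭 3 (by norm_num)
  have hm0 : m ≠ 0 := by rintro rfl; exact hm ⟨0, by norm_num⟩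
  obtain ⟨p, hpI⟩ := (IsPrincipalIdealRing.principal (Ideal.comap (Int.castRingHom (𝓞 K)) 𝔭)).1
  have hmem : ∀ n : ℤ, (n : 𝓞 K) ∈ 𝔭 ↔ p ∣ n := by
    intro n
    rw [← Ideal.mem_span_singleton, ← Ideal.submodule_span_eq, ← hpI]; rfl
  have hp0 : p ≠ 0 := by
    rintro rfl
    exact hm0 (zero_dvd_iff.mp ((hmem m).mp hm𝔭))
  have hpp : Prime p := by
    refine ⟨hp0, ?_, ?_⟩
    · intro hu
      exact hp.ne_top ((Ideal.eq_top_iff_one _).mpr (by simpa using (hmem 1).mpr hu.dvd))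
    · intro a b hab
      rw [← hmem, ← hmem]
      rw [← hmem] at hab
      push_cast at hab
      exact hp.mem_or_mem hab
  obtain ⟨r', rfl⟩ := (hmem r).mp hr𝔭
  obtain ⟨t', rfl⟩ := (hmem t).mp ht𝔭
  have hpc : ¬ p ∣ c := fun hh => hc𝔭 ((hmem c).mpr hh)
  have hp2m : p ^ 2 ∣ m := by
    have h1 : p ^ 2 ∣ m * c ^ 3 := ⟨p * r' ^ 3 - t' ^ 2, by linear_combination h⟩
    have : IsCoprime (p ^ 2) (c ^ 3) := ((hpp.coprime_iff_not_dvd).mpr hpc).pow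
    exact this.dvd_of_dvd_mul_right h1
  obtain ⟨m', rfl⟩ := hp2m
  have hpm' : ¬ p ∣ m' := by
    rintro ⟨k, rfl⟩
    exact hpp.not_isUnit (hcf p ⟨k, by ring⟩)
  have hpK : (p : K) ≠ 0 := by exact_mod_cast hp0
  have hωK : (ω : K) ^ 3 = (p : K) ^ 2 * m' := by
    have := congrArg (algebraMap (𝓞 K) K) hω
    simpa using this
  have hω0 : (ω : K) ≠ 0 := by
    intro h0
    rw [h0] at hωK
    have hm0K : ((p ^ 2 * m' : ℤ) : K) ≠ 0 := by exact_mod_cast hm0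
    apply hm0K
    push_cast
    rw [← hωK]; norm_num
  have hη3 : ((ω : K) ^ 2 / p) ^ 3 = ((p * m' ^ 2 : ℤ) : K) := by
    push_cast
    field_simp
    linear_combination ((ω : K) ^ 3 + p ^ 2 * m') * hωK
  have hηint : IsIntegral ℤ ((ω : K) ^ 2 / p) := by
    apply IsIntegral.of_pow (n := 3) (by norm_num)
    rw [hη3]
    exact isIntegral_algebraMap (R := ℤ) (x := p * m' ^ 2)
  obtain ⟨η, hη⟩ : ∃ η : 𝓞 K, (η : K) = (ω : K) ^ 2 / p := ⟨⟨_, hηint⟩, rfl⟩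
  have hη𝔭 : η ∈ 𝔭 := by
    apply hp.mem_of_pow_mem 3
    have : η ^ 3 = ((p * m' ^ 2 : ℤ) : 𝓞 K) := by
      apply RingOfIntegers.ext
      rw [← hη] at hη3
      simpa using hη3
    rw [this, hmem]
    exact Dvd.intro _ rfl
  refine ⟨(ω : K) / p, div_ne_zero hω0 hpK, r' * η - c * m', ?_, ?_⟩
  · have hαK : (α : K) = p * r' - c * ω := by rw [hα]; simp
    rw [hαK]
    simp only [map_sub, map_mul, map_intCast]
    rw [show algebraMap (𝓞 K) K η = (ω : K) ^ 2 / p from hη]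
    field_simp
    linear_combination (-(c : K)) * hωK
  · intro hu
    have : ((c * m' : ℤ) : 𝓞 K) ∈ 𝔭 := by
      have e : ((c * m' : ℤ) : 𝓞 K) = r' * η - (r' * η - c * m') := by push_cast; ring
      rw [e]
      exact 𝔭.sub_mem (𝔭.mul_mem_left _ hη𝔭) hu
    rw [hmem] at this
    rcases hpp.dvd_or_dvd this with h | h
    · exact hpc h
    · exact hpm' h

lemma int_t (m b r s : ℤ) (hs : s ≠ 0) (y : ℚ)
    (hns : (Wmb m b).Nonsingular ((r : ℚ) / (s : ℚ) ^ 2) y) :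
    ∃ t : ℤ, t ^ 2 = r ^ 3 - m * (s ^ 2 * b) ^ 3 := by
  have heqP := hns.1
  rw [WeierstrassCurve.Affine.equation_iff] at heqP
  simp [Wmb] at heqP
  have hsq : (s : ℚ) ≠ 0 := by exact_mod_cast hs
  have h2 : (y * s ^ 3) ^ 2 = ((r ^ 3 - m * (s ^ 2 * b) ^ 3 : ℤ) : ℚ) := by
    rw [mul_pow, heqP]; push_cast; field_simp; ring
  have hint : IsIntegral ℤ (y * s ^ 3) := by
    apply IsIntegral.of_pow (n := 2) (by norm_num)
    rw [h2]; exact isIntegral_algebraMap (R := ℤ) (x := r ^ 3 - m * (s ^ 2 * b) ^ 3)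
  obtain ⟨k, hk⟩ := IsIntegrallyClosed.isIntegral_iff.mp hint
  refine ⟨k, ?_⟩
  rw [← hk] at h2
  simp only [algebraMap_int_eq, eq_intCast] at h2
  exact_mod_cast h2

/-- For cubefree `m ≢ 0, ±1 (mod 9)`, `b ≠ 0`, and a rational point
`P = (r/s², y) ∈ E'(ℚ) \ 2E'(ℚ)` with `gcd(r,s) = gcd(r,b) = 1`, the element
`α = r − s²bω` is not a square in `K^×`, `K(√α)/K` is quadratic, and every nonzero
prime of `O_K` not lying above 2 is unramified in `K(√α)`. -/
theorem quadratic_extension_unramified_outside_two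
    (m : ℤ) (hm : ¬ ∃ k : ℤ, k ^ 3 = m) (hcf : ∀ d : ℤ, d ^ 3 ∣ m → IsUnit d)
    (h9 : (m : ZMod 9) ≠ 0 ∧ (m : ZMod 9) ≠ 1 ∧ (m : ZMod 9) ≠ -1)
    (K : Type*) [Field K] [NumberField K] (hK : Module.finrank ℚ K = 3)
    (ω : 𝓞 K) (hω : ω ^ 3 = (m : 𝓞 K))
    (b : ℤ) (hb : b ≠ 0)
    (P : (Wmb m b).Point) (hP : ∀ Q : (Wmb m b).Point, P ≠ 2 • Q)
    (r s : ℤ) (hs : s ≠ 0) (y : ℚ)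
    (hns : (Wmb m b).Nonsingular ((r : ℚ) / (s : ℚ) ^ 2) y)
    (hPeq : P = WeierstrassCurve.Affine.Point.some _ _ hns)
    (hrs : IsCoprime r s) (hrb : IsCoprime r b)
    (α : 𝓞 K) (hα : α = (r : 𝓞 K) - (s : 𝓞 K) ^ 2 * (b : 𝓞 K) * ω)
    (L : Type*) [Field L] [NumberField L] [Algebra K L]
    (θ : L) (hθ : θ ^ 2 = algebraMap K L (α : K))
    (hgen : Algebra.adjoin K {θ} = ⊤) :
    (¬ ∃ β : K, (α : K) = β ^ 2) ∧
    Module.finrank K L = 2 ∧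
    ∀ (𝔭 : Ideal (𝓞 K)) (𝔮 : Ideal (𝓞 L)), 𝔭.IsPrime → 𝔭 ≠ ⊥ → 𝔮.IsPrime →
      (2 : 𝓞 K) ∉ 𝔭 → Ideal.comap (algebraMap (𝓞 K) (𝓞 L)) 𝔮 = 𝔭 →
      Ideal.ramificationIdx' 𝔭 𝔮 = 1 := by
  have hsK : (s : K) ≠ 0 := by exact_mod_cast hs
  have hαK : (α : K) = r - s ^ 2 * b * (ω : K) := by rw [hα]; simp
  have hωK : (ω : K) ^ 3 = (m : K) := by
    have := congrArg (algebraMap (𝓞 K) K) hω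
    simpa using this
  have hsq : ¬ ∃ β : K, (α : K) = β ^ 2 := by
    rintro ⟨β, hβ⟩
    refine not_square m hm K hK (ω : K) hωK b hb P hP _ y hns hPeq (β / s) ?_
    rw [div_pow, ← hβ, hαK]
    push_cast
    field_simp
  refine ⟨hsq, finrank_two θ (α : K) hθ hgen hsq, ?_⟩
  intro 𝔭 𝔮 hp hp0 hq h2 hcomap
  obtain ⟨t, ht⟩ := int_t m b r s hs y hns
  obtain ⟨κ, hκ, u, hu, hu𝔭⟩ := exists_unit_mult m hm hcf h9 K ω hω r (s ^ 2 * b) t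
    (mul_ne_zero (pow_ne_zero _ hs) hb) ht (hrs.pow_right.mul_right hrb) α
    (by rw [hα]; push_cast; ring) 𝔭 hp
  exact unram_of_unit' θ (α : K) hθ hgen κ hκ u hu 𝔭 𝔮 hp hp0 hq h2 hcomap hu𝔭
end
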